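/- Let $1<p<\infty$, let $s\in[0,2\pi]$, and let $g:\overline{\mathbb{D}}\to\mathbb{C}$ be continuous on the closed unit disk and holomorphic on the open unit disk $\mathbb{D}$. Set $u=\operatorname{Re} g$. Then $\int_{-1}^{1}|u(re^{is})|^p\,dr\le \frac{1}{2\cos^p\frac{\pi}{2p}}\int_0^{2\pi}|u(e^{i\theta})|^p\,d\theta$. -/

import Mathlib

/-!
After a rotation the diameter is `(-1, 1)`, and on it `u = Re g` is the Poisson integral of its
boundary values. So the claim is an `L^p` bound for the positive kernel
`P(r, θ) = (1 - r²) / |e^{iθ} - r|²` from the circle to the diameter, and it follows from a Schur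
test. Write `b = 1/p` and `c = cos (πb/2)`. Hölder's inequality with the weight `|2 sin θ|^{-b}`
(`holder_step`), Tonelli's theorem (`schur_bound`) and two test estimates give the constant
`1 / (2 c^p)`.

* `lintegral_diskKernel_mul_sin_le`: `∫ P(r, θ) |2 sin θ|^{-b} dθ ≤ (2π/c) (1 - r²)^{-b}`. Here
  `|2 sin θ| = |1 - z²|` at `z = e^{iθ}`. The function `(1 - z²)⁻¹` has positive real part in the
  disk, so the modulus of its power `b` is at most `1/c` times the real part of that power,
  which is harmonic (`lintegral_diskKernel_mul_le`).

* `lintegral_dual`: `∫ (1 - r²)^b / |e^{iθ} - r|² dr ≤ (π/c) |2 sin θ|^{b-1}`. With `θ = 2α` and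
  `r = cos(φ + α) / cos(φ - α)` the left-hand side becomes
  `sin(2α)^{b-1} ∫₀^{π/2} (sin 2φ / cos²(φ - α))^b dφ`. The integrand is convex in `α`, and at
  both endpoints `α = 0` and `α = π/2` the integral equals
  `2^b ∫₀^{π/2} tan^b = 2^b π / (2c)` (`lintegral_tan_rpow_le`).
-/

open MeasureTheory Real Complex

open Set Filter Topology

/-! ### The Poisson kernel on the real diameter -/

/-- The Poisson kernel of the unit disk at the point `r` of the real diameter and the boundary
point `e^{iθ}`, without the factor `1 / (2π)`: `P(r, θ) = (1 - r²) / |e^{iθ} - r|²`. -/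
noncomputable def diskKernel (r θ : ℝ) : ℝ :=
  (1 - r ^ 2) / (1 - 2 * r * Real.cos θ + r ^ 2)

lemma diskKernel_denom_pos {r : ℝ} (hr : r ∈ Ioo (-1 : ℝ) 1) (θ : ℝ) :
    0 < 1 - 2 * r * Real.cos θ + r ^ 2 := by
  have h1 := Real.cos_le_one θ
  have h2 := Real.neg_one_le_cos θ
  obtain ⟨h3, h4⟩ := hr
  rcases le_total 0 r with h | h
  · nlinarith [mul_le_mul_of_nonneg_left h1 h]
  · nlinarith [mul_le_mul_of_nonpos_left h2 h]

lemma one_sub_sq_pos_of_mem {r : ℝ} (hr : r ∈ Ioo (-1 : ℝ) 1) : 0 < 1 - r ^ 2 := by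
  nlinarith [hr.1, hr.2]

lemma diskKernel_pos {r : ℝ} (hr : r ∈ Ioo (-1 : ℝ) 1) (θ : ℝ) : 0 < diskKernel r θ :=
  div_pos (one_sub_sq_pos_of_mem hr) (diskKernel_denom_pos hr θ)

lemma continuous_diskKernel {r : ℝ} (hr : r ∈ Ioo (-1 : ℝ) 1) : Continuous (diskKernel r) := by
  unfold diskKernel
  exact continuous_const.div (by fun_prop) fun θ => (diskKernel_denom_pos hr θ).ne'

lemma measurable_diskKernel : Measurable (fun x : ℝ × ℝ => diskKernel x.1 x.2) := by
  unfold diskKernel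
  fun_prop

lemma poissonKernel_eq_diskKernel (r θ : ℝ) :
    poissonKernel 0 (r : ℂ) (Complex.exp (θ * I)) = diskKernel r θ := by
  have h : ‖Complex.exp (θ * I) - r‖ ^ 2 = 1 - 2 * r * Real.cos θ + r ^ 2 := by
    rw [← Complex.normSq_eq_norm_sq, Complex.normSq_apply]
    simp only [sub_re, sub_im, exp_ofReal_mul_I_re, exp_ofReal_mul_I_im, ofReal_re, ofReal_im]
    nlinarith [Real.sin_sq_add_cos_sq θ]
  simp [poissonKernel, diskKernel, h, norm_exp_ofReal_mul_I]

lemma continuous_boundary {g : ℂ → ℂ} (hgc : ContinuousOn g (Metric.closedBall 0 1)) :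
    Continuous fun θ : ℝ => g (Complex.exp (θ * I)) := by
  refine hgc.comp_continuous (by fun_prop) fun θ => ?_
  simp [norm_exp_ofReal_mul_I]

/-- The Poisson formula for the real part of a disk-algebra function, on the real diameter. -/
lemma re_eq_integral_diskKernel {g : ℂ → ℂ} (hgc : ContinuousOn g (Metric.closedBall 0 1))
    (hg : DifferentiableOn ℂ g (Metric.ball 0 1)) {r : ℝ} (hr : r ∈ Ioo (-1 : ℝ) 1) :
    2 * π * (g r).re =
      ∫ θ in (0 : ℝ)..(2 * π), diskKernel r θ * (g (Complex.exp (θ * I))).re := by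
  have hd : DiffContOnCl ℂ g (Metric.ball 0 1) :=
    ⟨hg, by rwa [closure_ball _ one_ne_zero]⟩
  have hw : (r : ℂ) ∈ Metric.ball (0 : ℂ) 1 := by
    simp [abs_lt, hr.1, hr.2]
  have h := hd.circleAverage_poissonKernel_smul hw
  rw [circleAverage_def] at h
  have h2 : ∀ θ : ℝ, (poissonKernel 0 (r : ℂ) • g) (circleMap 0 1 θ)
      = diskKernel r θ • g (Complex.exp (θ * I)) := by
    intro θ
    simp [circleMap, ← poissonKernel_eq_diskKernel]
  simp_rw [h2] at h
  have h3 : (∫ θ in (0 : ℝ)..(2 * π), diskKernel r θ • g (Complex.exp (θ * I)))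
      = ((2 * π : ℝ) : ℂ) * g r := by
    rw [← h, Complex.real_smul, ← mul_assoc, ← ofReal_mul, mul_inv_cancel₀ (by positivity)]
    simp
  have h4 := Complex.reCLM.intervalIntegral_comp_comm (μ := volume) (a := 0) (b := 2 * π)
    (f := fun θ : ℝ => diskKernel r θ • g (Complex.exp (θ * I)))
    (((continuous_diskKernel hr).smul (continuous_boundary hgc)).intervalIntegrable _ _)
  rw [h3] at h4
  simpa using h4.symm

/-! ### Poisson integrals of powers of functions with positive real part -/

/-- On the right half-plane `Re w^b` is comparable to `|w|^b`, since `|b arg w| ≤ bπ/2`. -/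
lemma cos_mul_norm_rpow_le_re_cpow {b : ℝ} (hb0 : 0 < b) (hb1 : b < 1) {w : ℂ} (hw : 0 < w.re) :
    Real.cos (π * b / 2) * ‖w‖ ^ b ≤ (w ^ (b : ℂ)).re := by
  have hw0 : w ≠ 0 := fun h => by simp [h] at hw
  have harg : |w.arg| ≤ π / 2 := abs_arg_le_pi_div_two_iff.2 hw.le
  have h : (w ^ (b : ℂ)).re = ‖w‖ ^ b * Real.cos (b * w.arg) := by
    rw [cpow_def_of_ne_zero hw0, Complex.exp_re, Real.rpow_def_of_pos (norm_pos_iff.2 hw0)]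
    simp [Complex.log_re, Complex.log_im, mul_comm]
  rw [h, mul_comm]
  gcongr
  rw [← Real.cos_abs (b * w.arg), abs_mul, abs_of_pos hb0]
  apply Real.cos_le_cos_of_nonneg_of_le_pi (by positivity)
  · nlinarith [Real.pi_pos]
  · nlinarith

/-- Poisson integrals of `|G|^b` for `G` holomorphic with positive real part: by
`cos_mul_norm_rpow_le_re_cpow` they are dominated by the harmonic function `Re G^b`. The boundary
function `Φ` may be unbounded; it is reached by dilation and Fatou's lemma. -/
lemma lintegral_diskKernel_mul_le {b : ℝ} (hb0 : 0 < b) (hb1 : b < 1) {G : ℂ → ℂ}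
    (hG : DifferentiableOn ℂ G (Metric.ball 0 1)) (hre : ∀ z ∈ Metric.ball (0 : ℂ) 1, 0 < (G z).re)
    {r : ℝ} (hr : r ∈ Ioo (-1 : ℝ) 1) {Φ : ℝ → ℝ}
    (hΦ : ∀ᵐ θ : ℝ, Tendsto (fun ρ : ℝ => ‖G (ρ * Complex.exp (θ * I))‖ ^ b) (𝓝[<] 1) (𝓝 (Φ θ)))
    {L : ℝ} (hL : ∀ ρ ∈ Ioo (0 : ℝ) 1, ‖G (ρ * r)‖ ^ b ≤ L) :
    ∫⁻ θ in Ioc (0 : ℝ) (2 * π), ENNReal.ofReal (diskKernel r θ) * ENNReal.ofReal (Φ θ)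
      ≤ ENNReal.ofReal (2 * π / Real.cos (π * b / 2) * L) := by
  set c := Real.cos (π * b / 2) with hc
  have hc0 : 0 < c := Real.cos_pos_of_mem_Ioo
    ⟨by nlinarith [Real.pi_pos], by nlinarith [Real.pi_pos]⟩
  let ρ : ℕ → ℝ := fun n => 1 - 1 / ((n : ℝ) + 2)
  have hρ : ∀ n, ρ n ∈ Ioo (0 : ℝ) 1 := by
    intro n
    have hn : (0 : ℝ) ≤ n := Nat.cast_nonneg n
    have h1 : 1 / ((n : ℝ) + 2) < 1 := by rw [div_lt_one] <;> linarith
    have h2 : 0 < 1 / ((n : ℝ) + 2) := by positivity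
    exact ⟨by simp only [ρ]; linarith, by simp only [ρ]; linarith⟩
  have hρt : Tendsto ρ atTop (𝓝[<] 1) := by
    refine tendsto_nhdsWithin_iff.2 ⟨?_, Eventually.of_forall fun n => (hρ n).2⟩
    have h : Tendsto (fun n : ℕ => 1 / ((n : ℝ) + 2)) atTop (𝓝 0) := by
      simp only [one_div]
      exact tendsto_inv_atTop_zero.comp
        (tendsto_atTop_add_const_right _ _ tendsto_natCast_atTop_atTop)
    simpa [ρ] using tendsto_const_nhds.sub h
  have hball : ∀ n, ∀ z ∈ Metric.closedBall (0 : ℂ) 1, (ρ n : ℂ) * z ∈ Metric.ball (0 : ℂ) 1 := by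
    intro n z hz
    simp only [mem_closedBall_zero_iff, mem_ball_zero_iff, norm_mul, norm_real, Real.norm_eq_abs,
      abs_of_pos (hρ n).1] at hz ⊢
    nlinarith [(hρ n).1, (hρ n).2]
  have hexp : ∀ θ : ℝ, Complex.exp (θ * I) ∈ Metric.closedBall (0 : ℂ) 1 := fun θ => by
    simp [norm_exp_ofReal_mul_I]
  have hdiff : ∀ n, DifferentiableOn ℂ (fun z => G (ρ n * z)) (Metric.ball 0 1) := fun n =>
    hG.comp (by fun_prop) fun z hz => hball n z (Metric.ball_subset_closedBall hz)
  have hcont : ∀ n, ContinuousOn (fun z => G (ρ n * z)) (Metric.closedBall 0 1) := fun n =>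
    hG.continuousOn.comp (by fun_prop) fun z hz => hball n z hz
  have hslit : ∀ n, ∀ z ∈ Metric.closedBall (0 : ℂ) 1, G (ρ n * z) ∈ slitPlane := fun n z hz =>
    Or.inl (hre _ (hball n z hz))
  have hbd : ∀ n, Continuous fun θ : ℝ => ‖G (ρ n * Complex.exp (θ * I))‖ ^ b := fun n =>
    (continuous_boundary (hcont n)).norm.rpow_const fun _ => Or.inr hb0.le
  have hstep : ∀ n, ∫⁻ θ in Ioc (0 : ℝ) (2 * π),
      ENNReal.ofReal (diskKernel r θ) *
        ENNReal.ofReal (‖G (ρ n * Complex.exp (θ * I))‖ ^ b)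
      ≤ ENNReal.ofReal (2 * π / c * L) := by
    intro n
    have hFc : ContinuousOn (fun z => G (ρ n * z) ^ (b : ℂ)) (Metric.closedBall 0 1) :=
      (hcont n).cpow continuousOn_const (hslit n)
    have hFd : DifferentiableOn ℂ (fun z => G (ρ n * z) ^ (b : ℂ)) (Metric.ball 0 1) :=
      (hdiff n).cpow (differentiableOn_const _) fun z hz =>
        hslit n z (Metric.ball_subset_closedBall hz)
    have hP := re_eq_integral_diskKernel hFc hFd hr
    have hint : Continuous fun θ : ℝ =>
        diskKernel r θ * ‖G (ρ n * Complex.exp (θ * I))‖ ^ b :=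
      (continuous_diskKernel hr).mul (hbd n)
    have hle : c * ∫ θ in (0 : ℝ)..(2 * π),
        diskKernel r θ * ‖G (ρ n * Complex.exp (θ * I))‖ ^ b ≤ 2 * π * L := by
      rw [← intervalIntegral.integral_const_mul]
      refine (intervalIntegral.integral_mono_on (by positivity)
        ((continuous_const.mul hint).intervalIntegrable _ _)
        (((continuous_diskKernel hr).mul
          (Complex.continuous_re.comp (continuous_boundary hFc))).intervalIntegrable _ _)
        fun θ _ => ?_).trans (hP.symm.le.trans ?_)
      · have h := cos_mul_norm_rpow_le_re_cpow hb0 hb1 (hre _ (hball n _ (hexp θ)))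
        calc c * (diskKernel r θ * ‖G (ρ n * Complex.exp (θ * I))‖ ^ b)
            = diskKernel r θ * (c * ‖G (ρ n * Complex.exp (θ * I))‖ ^ b) := by ring
          _ ≤ _ := mul_le_mul_of_nonneg_left h (diskKernel_pos hr θ).le
      · gcongr
        refine (Complex.re_le_norm _).trans ?_
        rw [norm_cpow_real]
        exact hL _ (hρ n)
    simp_rw [← ENNReal.ofReal_mul (diskKernel_pos hr _).le]
    rw [← ofReal_integral_eq_lintegral_ofReal
      ((hint.intervalIntegrable 0 (2 * π)).1)
      (ae_of_all _ fun θ => mul_nonneg (diskKernel_pos hr θ).le (by positivity)),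
      ← intervalIntegral.integral_of_le (by positivity)]
    apply ENNReal.ofReal_le_ofReal
    rw [div_mul_eq_mul_div, le_div_iff₀ hc0, mul_comm]
    exact hle
  calc _ ≤ ∫⁻ θ in Ioc (0 : ℝ) (2 * π), liminf (fun n => ENNReal.ofReal (diskKernel r θ) *
        ENNReal.ofReal (‖G (ρ n * Complex.exp (θ * I))‖ ^ b)) atTop := by
        refine lintegral_mono_ae ?_
        filter_upwards [ae_restrict_of_ae hΦ] with θ hθ
        refine (Tendsto.liminf_eq ?_).ge
        exact ENNReal.Tendsto.const_mul (ENNReal.tendsto_ofReal (hθ.comp hρt))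
          (Or.inr ENNReal.ofReal_ne_top)
    _ ≤ liminf (fun n => ∫⁻ θ in Ioc (0 : ℝ) (2 * π), ENNReal.ofReal (diskKernel r θ) *
        ENNReal.ofReal (‖G (ρ n * Complex.exp (θ * I))‖ ^ b)) atTop := by
        refine lintegral_liminf_le fun n => ?_
        exact (continuous_diskKernel hr).measurable.ennreal_ofReal.mul
          (hbd n).measurable.ennreal_ofReal
    _ ≤ _ := by
        refine liminf_le_of_le (by isBoundedDefault) fun a ha => ?_
        obtain ⟨n, hn⟩ := ha.exists
        exact hn.trans (hstep n)

/-! ### The two explicit Poisson integrals -/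

lemma ae_sin_ne_zero : ∀ᵐ θ : ℝ, Real.sin θ ≠ 0 := by
  have h : {θ : ℝ | Real.sin θ = 0}.Countable := by
    refine (countable_range fun n : ℤ => (n : ℝ) * π).mono fun θ hθ => ?_
    obtain ⟨n, hn⟩ := Real.sin_eq_zero_iff.1 hθ
    exact ⟨n, hn⟩
  exact h.ae_notMem volume

lemma ae_cos_ne_zero : ∀ᵐ θ : ℝ, Real.cos θ ≠ 0 := by
  have h : {θ : ℝ | Real.cos θ = 0}.Countable := by
    refine (countable_range fun n : ℤ => (2 * (n : ℝ) + 1) * π / 2).mono fun θ hθ => ?_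
    obtain ⟨n, hn⟩ := Real.cos_eq_zero_iff.1 hθ
    exact ⟨n, hn.symm⟩
  exact h.ae_notMem volume

lemma norm_one_sub_exp_sq (θ : ℝ) : ‖1 - Complex.exp (θ * I) ^ 2‖ = |2 * Real.sin θ| := by
  have h : 1 - Complex.exp (θ * I) ^ 2
      = ((2 * Real.sin θ : ℝ) : ℂ) * (-I) * Complex.exp (θ * I) := by
    rw [Complex.exp_mul_I]
    push_cast
    linear_combination -(Complex.sin_sq_add_cos_sq (θ : ℂ)) + Complex.sin θ ^ 2 * Complex.I_sq
  rw [h, norm_mul, norm_mul, norm_exp_ofReal_mul_I, norm_real, norm_neg, norm_I]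
  simp

lemma norm_one_add_exp_sq (θ : ℝ) : ‖1 + Complex.exp (θ * I) ^ 2‖ = |2 * Real.cos θ| := by
  have h : 1 + Complex.exp (θ * I) ^ 2
      = ((2 * Real.cos θ : ℝ) : ℂ) * Complex.exp (θ * I) := by
    rw [Complex.exp_mul_I]
    push_cast
    linear_combination -(Complex.sin_sq_add_cos_sq (θ : ℂ)) + Complex.sin θ ^ 2 * Complex.I_sq
  rw [h, norm_mul, norm_exp_ofReal_mul_I, norm_real]
  simp

/-- A function continuous at a boundary point has its value there as radial limit. -/
lemma tendsto_radial {G : ℂ → ℂ} {b : ℝ} (hb0 : 0 < b) {θ : ℝ}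
    (hG : ContinuousAt G (Complex.exp (θ * I))) :
    Tendsto (fun ρ : ℝ => ‖G (ρ * Complex.exp (θ * I))‖ ^ b) (𝓝[<] 1)
      (𝓝 (‖G (Complex.exp (θ * I))‖ ^ b)) := by
  have h1 : Tendsto (fun ρ : ℝ => (ρ : ℂ) * Complex.exp (θ * I)) (𝓝[<] 1)
      (𝓝 (Complex.exp (θ * I))) := by
    have h : ContinuousAt (fun ρ : ℝ => (ρ : ℂ) * Complex.exp (θ * I)) 1 := by fun_prop
    simpa [ContinuousAt] using h.tendsto.mono_left nhdsWithin_le_nhds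
  exact ((hG.tendsto.comp h1).norm).rpow_const (Or.inr hb0.le)

lemma norm_sq_lt_one {z : ℂ} (hz : z ∈ Metric.ball (0 : ℂ) 1) : ‖z ^ 2‖ < 1 := by
  rw [norm_pow]
  exact pow_lt_one₀ (norm_nonneg _) (by simpa using hz) two_ne_zero

lemma one_add_re_pos {w : ℂ} (hw : ‖w‖ < 1) : 0 < (1 + w).re := by
  have := abs_lt.1 ((Complex.abs_re_le_norm w).trans_lt hw)
  simp only [add_re, one_re]
  linarith

lemma one_sub_re_pos {w : ℂ} (hw : ‖w‖ < 1) : 0 < (1 - w).re := by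
  simpa [sub_eq_add_neg] using one_add_re_pos (w := -w) (by simpa using hw)

/-- First half of the Schur test: the Poisson integral of `|1 - e^{2iθ}|^{-b}` on the diameter. -/
lemma lintegral_diskKernel_mul_sin_le {b : ℝ} (hb0 : 0 < b) (hb1 : b < 1) {r : ℝ}
    (hr : r ∈ Ioo (-1 : ℝ) 1) :
    ∫⁻ θ in Ioc (0 : ℝ) (2 * π),
        ENNReal.ofReal (diskKernel r θ) * ENNReal.ofReal (|2 * Real.sin θ| ^ (-b))
      ≤ ENNReal.ofReal (2 * π / Real.cos (π * b / 2) * (1 - r ^ 2) ^ (-b)) := by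
  refine lintegral_diskKernel_mul_le hb0 hb1 (G := fun z => (1 - z ^ 2)⁻¹) ?_ ?_ hr ?_ ?_
  · exact DifferentiableOn.inv (by fun_prop) fun z hz =>
      ne_zero_of_re_pos (one_sub_re_pos (norm_sq_lt_one hz))
  · intro z hz
    have h := one_sub_re_pos (norm_sq_lt_one hz)
    rw [inv_re]
    exact div_pos h (normSq_pos.2 (ne_zero_of_re_pos h))
  · filter_upwards [ae_sin_ne_zero] with θ hθ
    have hne : 1 - Complex.exp (θ * I) ^ 2 ≠ 0 := by
      rw [← norm_pos_iff, norm_one_sub_exp_sq]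
      positivity
    have h := tendsto_radial hb0 (G := fun z => (1 - z ^ 2)⁻¹) (θ := θ)
      (ContinuousAt.inv₀ (by fun_prop) hne)
    convert h using 2
    rw [norm_inv, norm_one_sub_exp_sq, Real.inv_rpow (abs_nonneg _), Real.rpow_neg (abs_nonneg _)]
  · intro ρ hρ
    have h1 : (1 - ((ρ : ℂ) * r) ^ 2)⁻¹ = (((1 - (ρ * r) ^ 2)⁻¹ : ℝ) : ℂ) := by push_cast; rfl
    have h0 := one_sub_sq_pos_of_mem hr
    have h2 : 1 - r ^ 2 ≤ 1 - (ρ * r) ^ 2 := by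
      have : ρ ^ 2 ≤ 1 := by nlinarith [hρ.1, hρ.2]
      nlinarith [sq_nonneg r]
    have h3 : 0 < 1 - (ρ * r) ^ 2 := h0.trans_le h2
    simp only [h1]
    rw [norm_real, Real.norm_of_nonneg (by positivity), Real.inv_rpow h3.le, Real.rpow_neg h0.le]
    gcongr

lemma lintegral_Ioc_double {h : ℝ} (hh : 0 < h) {F : ℝ → ENNReal} (hF : Measurable F) :
    ∫⁻ x in Ioc 0 (2 * h), F x = ∫⁻ x in Ioc 0 h, (F x + F (x + h)) := by
  have hU : Ioc 0 (2 * h) = Ioc 0 h ∪ Ioc h (2 * h) :=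
    (Ioc_union_Ioc_eq_Ioc hh.le (by linarith)).symm
  have hd : Disjoint (Ioc 0 h) (Ioc h (2 * h)) := by
    rw [Set.disjoint_left]
    intro x hx hx'
    exact absurd hx.2 (not_le.2 hx'.1)
  rw [hU, lintegral_union measurableSet_Ioc hd, lintegral_add_left hF]
  congr 1
  have him : Ioc h (2 * h) = (fun x => x + h) '' Ioc 0 h := by
    rw [image_add_const_Ioc]
    congr 1 <;> ring
  rw [him, lintegral_image_eq_lintegral_abs_deriv_mul measurableSet_Ioc
    (f' := fun _ => 1) (fun x _ => ((hasDerivAt_id' x).add_const h).hasDerivWithinAt)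
    (add_left_injective h).injOn]
  simp

lemma lintegral_Ioo_reflect (h : ℝ) (F : ℝ → ENNReal) :
    ∫⁻ x in Ioo 0 h, F (h - x) = ∫⁻ x in Ioo 0 h, F x := by
  have him : (fun x => h - x) '' Ioo 0 h = Ioo 0 h := by simp
  conv_rhs => rw [← him]
  rw [lintegral_image_eq_lintegral_abs_deriv_mul measurableSet_Ioo
    (f' := fun _ => -1) (fun x _ => ((hasDerivAt_id' x).const_sub h).hasDerivWithinAt)
    (sub_right_injective).injOn]
  simp

/-- The classical value `∫₀^{π/2} tan^b = π / (2 cos (πb/2))`, as an upper bound: it is the mean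
value property at `0` of `((1 - z²) / (1 + z²))^b`. -/
lemma lintegral_tan_rpow_le {b : ℝ} (hb0 : 0 < b) (hb1 : b < 1) :
    ∫⁻ φ in Ioo (0 : ℝ) (π / 2), ENNReal.ofReal (Real.tan φ ^ b)
      ≤ ENNReal.ofReal (π / (2 * Real.cos (π * b / 2))) := by
  have hm : Measurable fun θ : ℝ => ENNReal.ofReal (|Real.tan θ| ^ b) := by
    have : Measurable Real.tan := by
      have : Real.tan = fun x => Real.sin x / Real.cos x := funext Real.tan_eq_sin_div_cos
      rw [this]; fun_prop
    fun_prop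
  have h1 : ∫⁻ θ in Ioc (0 : ℝ) (2 * π), ENNReal.ofReal (|Real.tan θ| ^ b)
      ≤ ENNReal.ofReal (2 * π / Real.cos (π * b / 2)) := by
    have h := lintegral_diskKernel_mul_le hb0 hb1 (G := fun z => (1 - z ^ 2) / (1 + z ^ 2))
      (r := 0) (Φ := fun θ => |Real.tan θ| ^ b) (L := 1) ?_ ?_ (by simp) ?_ ?_
    · simpa [diskKernel] using h
    · exact DifferentiableOn.div (by fun_prop) (by fun_prop) fun z hz =>
        ne_zero_of_re_pos (one_add_re_pos (norm_sq_lt_one hz))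
    · intro z hz
      have hz1 := norm_sq_lt_one hz
      have hp := normSq_pos.2 (ne_zero_of_re_pos (one_add_re_pos hz1))
      have hsq : (z ^ 2).re * (z ^ 2).re + (z ^ 2).im * (z ^ 2).im < 1 := by
        rw [← normSq_apply, normSq_eq_norm_sq]
        exact pow_lt_one₀ (norm_nonneg _) hz1 two_ne_zero
      rw [div_re, ← add_div]
      refine div_pos ?_ hp
      generalize z ^ 2 = w at hsq
      simp only [sub_re, one_re, add_re, sub_im, one_im, add_im]
      nlinarith
    · filter_upwards [ae_cos_ne_zero] with θ hθ
      have hne : 1 + Complex.exp (θ * I) ^ 2 ≠ 0 := by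
        rw [← norm_pos_iff, norm_one_add_exp_sq]
        positivity
      have h := tendsto_radial hb0 (G := fun z => (1 - z ^ 2) / (1 + z ^ 2)) (θ := θ)
        (ContinuousAt.div₀ (by fun_prop) (by fun_prop) hne)
      convert h using 3
      rw [norm_div, norm_one_sub_exp_sq, norm_one_add_exp_sq, ← abs_div, Real.tan_eq_sin_div_cos,
        mul_div_mul_left _ _ two_ne_zero]
    · intro ρ _
      simp
  rw [lintegral_Ioc_double Real.pi_pos hm] at h1
  simp only [Real.tan_add_pi, ← two_mul] at h1
  rw [lintegral_const_mul _ hm, show Ioc 0 π = Ioc 0 (2 * (π / 2)) by congr 1; ring,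
    lintegral_Ioc_double Real.pi_div_two_pos hm, setLIntegral_congr Ioo_ae_eq_Ioc.symm,
    lintegral_add_left hm] at h1
  have h2 : ∫⁻ x in Ioo 0 (π / 2), ENNReal.ofReal (|Real.tan (x + π / 2)| ^ b)
      = ∫⁻ x in Ioo 0 (π / 2), ENNReal.ofReal (|Real.tan x| ^ b) := by
    rw [← lintegral_Ioo_reflect (π / 2) fun x => ENNReal.ofReal (|Real.tan x| ^ b)]
    refine lintegral_congr fun x => ?_
    have : Real.tan (x + π / 2) = - Real.tan (π / 2 - x) := by
      rw [← Real.tan_neg, neg_sub, ← Real.tan_sub_pi]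
      congr 1; ring
    rw [this, abs_neg]
  have h3 : ∫⁻ φ in Ioo (0 : ℝ) (π / 2), ENNReal.ofReal (Real.tan φ ^ b)
      = ∫⁻ x in Ioo 0 (π / 2), ENNReal.ofReal (|Real.tan x| ^ b) :=
    setLIntegral_congr_fun measurableSet_Ioo fun x hx => by
      simp only [abs_of_pos (Real.tan_pos_of_pos_of_lt_pi_div_two hx.1 hx.2)]
  rw [h2, ← two_mul, ← mul_assoc, ← h3] at h1
  have h4 : ENNReal.ofReal (2 * π / Real.cos (π * b / 2))
      = 2 * 2 * ENNReal.ofReal (π / (2 * Real.cos (π * b / 2))) := by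
    rw [show (2 * 2 : ENNReal) = ENNReal.ofReal 4 by norm_num,
      ← ENNReal.ofReal_mul (by norm_num)]
    congr 1
    field_simp
    norm_num
  rw [h4] at h1
  exact (ENNReal.mul_le_mul_iff_right (by norm_num) (by finiteness)).1 h1

lemma lintegral_inv_tan_rpow_le {b : ℝ} (hb0 : 0 < b) (hb1 : b < 1) :
    ∫⁻ φ in Ioo (0 : ℝ) (π / 2), ENNReal.ofReal ((Real.tan φ)⁻¹ ^ b)
      ≤ ENNReal.ofReal (π / (2 * Real.cos (π * b / 2))) := by
  simp_rw [← Real.tan_pi_div_two_sub]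
  rw [lintegral_Ioo_reflect (π / 2) fun x => ENNReal.ofReal (Real.tan x ^ b)]
  exact lintegral_tan_rpow_le hb0 hb1

/-! ### The dual estimate -/

/-- Convexity of `α ↦ cos(φ - α)^{-2b}` on `[0, π/2]`, in the form used to compare the value at
`α` with the values at the endpoints `0` and `π/2`. -/
lemma sin_div_cos_sq_rpow_le {b α φ : ℝ} (hb0 : 0 < b)
    (hα : α ∈ Ioo 0 (π / 2)) (hφ : φ ∈ Ioo 0 (π / 2)) :
    (Real.sin (2 * φ) / Real.cos (φ - α) ^ 2) ^ b ≤
      2 ^ b * ((1 - α / (π / 2)) * Real.tan φ ^ b + α / (π / 2) * (Real.tan φ)⁻¹ ^ b) := by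
  obtain ⟨hα0, hα1⟩ := hα
  obtain ⟨hφ0, hφ1⟩ := hφ
  have hπ := Real.pi_div_two_pos
  set l := α / (π / 2) with hl
  have hl0 : 0 ≤ l := by positivity
  have hl1 : 0 ≤ 1 - l := sub_nonneg.2 ((div_le_one hπ).2 hα1.le)
  have hlα : l * (π / 2) = α := by rw [hl]; field_simp
  have hC : 0 < Real.cos φ := Real.cos_pos_of_mem_Ioo ⟨by linarith, hφ1⟩
  have hS : 0 < Real.sin φ := Real.sin_pos_of_pos_of_lt_pi hφ0 (by linarith)
  have hX : 0 < Real.cos (φ - α) := Real.cos_pos_of_mem_Ioo ⟨by linarith, by linarith⟩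
  have hconc : (1 - l) * Real.cos φ + l * Real.sin φ ≤ Real.cos (φ - α) := by
    have h := strictConcaveOn_cos_Icc.concaveOn.2 (x := φ) (y := φ - π / 2)
      ⟨by linarith, hφ1.le⟩ ⟨by linarith, by linarith⟩ hl1 hl0 (by ring)
    simp only [smul_eq_mul, Real.cos_sub_pi_div_two] at h
    rwa [show (1 - l) * φ + l * (φ - π / 2) = φ - α by rw [← hlα]; ring] at h
  have hgm := (Real.geom_mean_le_arith_mean2_weighted hl1 hl0 hC.le hS.le (by ring)).trans hconc
  set t := Real.tan φ with ht
  have ht0 : 0 < t := Real.tan_pos_of_pos_of_lt_pi_div_two hφ0 hφ1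
  have hbase : Real.sin (2 * φ) / Real.cos (φ - α) ^ 2 ≤ 2 * (t ^ (1 - l) * t⁻¹ ^ l) := by
    rw [div_le_iff₀ (by positivity)]
    calc Real.sin (2 * φ)
        = 2 * (t ^ (1 - l) * t⁻¹ ^ l) *
            (Real.cos φ ^ (1 - l) * Real.sin φ ^ l) ^ 2 := by
          have e1 : Real.cos φ ^ (1 - l) * Real.cos φ ^ l = Real.cos φ := by
            rw [← Real.rpow_add hC]; simp
          have e2 : Real.sin φ ^ (1 - l) * Real.sin φ ^ l = Real.sin φ := by
            rw [← Real.rpow_add hS]; simp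
          have p1 := Real.rpow_pos_of_pos hC (1 - l)
          have p2 := Real.rpow_pos_of_pos hS l
          rw [ht, Real.tan_eq_sin_div_cos, inv_div, Real.div_rpow hS.le hC.le,
            Real.div_rpow hC.le hS.le, Real.sin_two_mul]
          field_simp
          calc Real.sin φ * Real.cos φ
              = (Real.sin φ ^ (1 - l) * Real.sin φ ^ l) *
                (Real.cos φ ^ (1 - l) * Real.cos φ ^ l) := by rw [e1, e2]
            _ = _ := by ring
      _ ≤ _ := by gcongr
  have hnum : 0 ≤ Real.sin (2 * φ) :=
    Real.sin_nonneg_of_nonneg_of_le_pi (by linarith) (by linarith)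
  calc _ ≤ (2 * (t ^ (1 - l) * t⁻¹ ^ l)) ^ b := by gcongr
    _ = 2 ^ b * ((t ^ b) ^ (1 - l) * (t⁻¹ ^ b) ^ l) := by
        rw [Real.mul_rpow (by positivity) (by positivity),
          Real.mul_rpow (by positivity) (by positivity), ← Real.rpow_mul ht0.le,
          ← Real.rpow_mul ht0.le, ← Real.rpow_mul (by positivity),
          ← Real.rpow_mul (by positivity), mul_comm b, mul_comm b]
    _ ≤ _ := by
        gcongr
        exact Real.geom_mean_le_arith_mean2_weighted hl1 hl0 (by positivity) (by positivity)
          (by ring)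

/-- The dual estimate, with `θ = 2α`. The substitution `r = cos(φ + α) / cos(φ - α)` is the one
that turns the Cayley image of the diameter into `tan φ` measured in units of `tan α`. -/
lemma lintegral_dual_aux {b α : ℝ} (hb0 : 0 < b) (hb1 : b < 1) (hα : α ∈ Ioo 0 (π / 2)) :
    ∫⁻ r in Ioo (-1 : ℝ) 1,
        ENNReal.ofReal ((1 - r ^ 2) ^ b / (1 - 2 * r * Real.cos (2 * α) + r ^ 2))
      ≤ ENNReal.ofReal (π / Real.cos (π * b / 2) * (2 * Real.sin (2 * α)) ^ (b - 1)) := by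
  have hα0 := hα.1
  have hα1 := hα.2
  have hπ := Real.pi_div_two_pos
  set c := Real.cos (π * b / 2) with hc
  have hc0 : 0 < c := Real.cos_pos_of_mem_Ioo
    ⟨by nlinarith [Real.pi_pos], by nlinarith [Real.pi_pos]⟩
  have hs : 0 < Real.sin (2 * α) := Real.sin_pos_of_pos_of_lt_pi (by linarith) (by linarith)
  have hX : ∀ φ ∈ Icc 0 (π / 2), 0 < Real.cos (φ - α) := fun φ hφ =>
    Real.cos_pos_of_mem_Ioo ⟨by linarith [hφ.1], by linarith [hφ.2]⟩
  let ψ : ℝ → ℝ := fun φ => Real.cos (φ + α) / Real.cos (φ - α)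
  let ψ' : ℝ → ℝ := fun φ => -(Real.sin (2 * α) / Real.cos (φ - α) ^ 2)
  have hderiv : ∀ φ ∈ Ioo 0 (π / 2), HasDerivWithinAt ψ (ψ' φ) (Ioo 0 (π / 2)) φ := by
    intro φ hφ
    have h := (((hasDerivAt_id' φ).add_const α).cos).div (((hasDerivAt_id' φ).sub_const α).cos)
      (hX φ (Ioo_subset_Icc_self hφ)).ne'
    refine (h.congr_deriv ?_).hasDerivWithinAt
    simp only [ψ']
    rw [← neg_div]
    congr 1
    rw [show 2 * α = (φ + α) - (φ - α) by ring, Real.sin_sub (φ + α)]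
    ring
  have hanti : AntitoneOn ψ (Ioo 0 (π / 2)) := by
    intro x hx y hy hxy
    simp only [ψ]
    rw [div_le_div_iff₀ (hX y (Ioo_subset_Icc_self hy)) (hX x (Ioo_subset_Icc_self hx))]
    have h1 : 0 ≤ Real.sin (y - x) :=
      Real.sin_nonneg_of_nonneg_of_le_pi (by linarith) (by linarith [hx.1, hy.2])
    have h2 : Real.cos (x + α) * Real.cos (y - α) - Real.cos (y + α) * Real.cos (x - α)
        = Real.sin (2 * α) * Real.sin (y - x) := by
      simp only [Real.cos_add, Real.cos_sub, Real.sin_sub, Real.sin_two_mul]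
      ring
    nlinarith [mul_nonneg hs.le h1]
  have hsub : Ioo (-1 : ℝ) 1 ⊆ ψ '' Ioo 0 (π / 2) := by
    have hcont : ContinuousOn ψ (Icc 0 (π / 2)) :=
      ContinuousOn.div (by fun_prop) (by fun_prop) fun φ hφ => (hX φ hφ).ne'
    have h := intermediate_value_Ioo' hπ.le hcont
    have h0 : ψ 0 = 1 := by
      have : Real.cos α ≠ 0 := by simpa using (hX 0 ⟨le_rfl, hπ.le⟩).ne'
      simp [ψ, this]
    have h1 : ψ (π / 2) = -1 := by
      have : Real.sin α ≠ 0 := (Real.sin_pos_of_pos_of_lt_pi hα0 (by linarith)).ne'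
      simp only [ψ]
      rw [add_comm, Real.cos_add_pi_div_two, Real.cos_pi_div_two_sub, neg_div, div_self this]
    rwa [h0, h1] at h
  set l := α / (π / 2) with hl
  have hl0 : 0 ≤ l := by positivity
  have hl1 : 0 ≤ 1 - l := sub_nonneg.2 ((div_le_one hπ).2 hα1.le)
  have hmt : Measurable Real.tan := by
    have : Real.tan = fun x => Real.sin x / Real.cos x := funext Real.tan_eq_sin_div_cos
    rw [this]; fun_prop
  have hpt : ∀ φ ∈ Ioo 0 (π / 2), ENNReal.ofReal (-ψ' φ) * ENNReal.ofReal
      ((1 - ψ φ ^ 2) ^ b / (1 - 2 * ψ φ * Real.cos (2 * α) + ψ φ ^ 2)) ≤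
      ENNReal.ofReal (Real.sin (2 * α) ^ (b - 1) * 2 ^ b) *
        (ENNReal.ofReal (1 - l) * ENNReal.ofReal (Real.tan φ ^ b) +
          ENNReal.ofReal l * ENNReal.ofReal ((Real.tan φ)⁻¹ ^ b)) := by
    intro φ hφ
    have ht : 0 < Real.tan φ := Real.tan_pos_of_pos_of_lt_pi_div_two hφ.1 hφ.2
    have hx := hX φ (Ioo_subset_Icc_self hφ)
    have hs2 : 0 < Real.sin (2 * φ) :=
      Real.sin_pos_of_pos_of_lt_pi (by linarith [hφ.1]) (by linarith [hφ.2])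
    have hψ' : 0 ≤ -ψ' φ := by
      simp only [ψ', neg_neg]
      positivity
    have hK : 0 ≤ Real.sin (2 * α) ^ (b - 1) * 2 ^ b := by positivity
    rw [← ENNReal.ofReal_mul hl1, ← ENNReal.ofReal_mul hl0, ← ENNReal.ofReal_add
      (mul_nonneg hl1 (by positivity)) (mul_nonneg hl0 (by positivity)),
      ← ENNReal.ofReal_mul hK, ← ENNReal.ofReal_mul hψ']
    apply ENNReal.ofReal_le_ofReal
    have e1 : 1 - ψ φ ^ 2 = Real.sin (2 * α) * (Real.sin (2 * φ) / Real.cos (φ - α) ^ 2) := by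
      simp only [ψ]
      field_simp
      rw [show α * 2 = (φ + α) - (φ - α) by ring, show φ * 2 = (φ + α) + (φ - α) by ring,
        Real.sin_sub (φ + α) (φ - α), Real.sin_add (φ + α) (φ - α)]
      nlinarith [Real.sin_sq_add_cos_sq (φ + α), Real.sin_sq_add_cos_sq (φ - α)]
    have e2 : 1 - 2 * ψ φ * Real.cos (2 * α) + ψ φ ^ 2
        = Real.sin (2 * α) ^ 2 / Real.cos (φ - α) ^ 2 := by
      simp only [ψ]
      field_simp
      rw [show 2 * α = (φ + α) - (φ - α) by ring,
        Real.sin_sub (φ + α) (φ - α), Real.cos_sub (φ + α) (φ - α)]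
      linear_combination -(Real.cos (φ - α) ^ 2) * Real.sin_sq_add_cos_sq (φ + α)
        - Real.cos (φ + α) ^ 2 * Real.sin_sq_add_cos_sq (φ - α)
    calc -ψ' φ * ((1 - ψ φ ^ 2) ^ b / (1 - 2 * ψ φ * Real.cos (2 * α) + ψ φ ^ 2))
        = Real.sin (2 * α) ^ (b - 1) * (Real.sin (2 * φ) / Real.cos (φ - α) ^ 2) ^ b := by
          rw [e1, e2, Real.mul_rpow hs.le (by positivity), Real.rpow_sub_one hs.ne']
          simp only [ψ']
          field_simp
      _ ≤ Real.sin (2 * α) ^ (b - 1) *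
            (2 ^ b * ((1 - l) * Real.tan φ ^ b + l * (Real.tan φ)⁻¹ ^ b)) := by
          gcongr
          exact sin_div_cos_sq_rpow_le hb0 hα hφ
      _ = _ := by ring
  calc _ ≤ ∫⁻ r in ψ '' Ioo 0 (π / 2),
        ENNReal.ofReal ((1 - r ^ 2) ^ b / (1 - 2 * r * Real.cos (2 * α) + r ^ 2)) :=
        lintegral_mono_set hsub
    _ = ∫⁻ φ in Ioo 0 (π / 2), ENNReal.ofReal (-ψ' φ) * ENNReal.ofReal
        ((1 - ψ φ ^ 2) ^ b / (1 - 2 * ψ φ * Real.cos (2 * α) + ψ φ ^ 2)) :=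
        lintegral_image_eq_lintegral_deriv_mul_of_antitoneOn measurableSet_Ioo hderiv hanti _
    _ ≤ ∫⁻ φ in Ioo 0 (π / 2), ENNReal.ofReal (Real.sin (2 * α) ^ (b - 1) * 2 ^ b) *
        (ENNReal.ofReal (1 - l) * ENNReal.ofReal (Real.tan φ ^ b) +
          ENNReal.ofReal l * ENNReal.ofReal ((Real.tan φ)⁻¹ ^ b)) :=
        setLIntegral_mono' measurableSet_Ioo hpt
    _ = ENNReal.ofReal (Real.sin (2 * α) ^ (b - 1) * 2 ^ b) *
        (ENNReal.ofReal (1 - l) * (∫⁻ φ in Ioo 0 (π / 2), ENNReal.ofReal (Real.tan φ ^ b)) +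
          ENNReal.ofReal l *
            ∫⁻ φ in Ioo 0 (π / 2), ENNReal.ofReal ((Real.tan φ)⁻¹ ^ b)) := by
        rw [lintegral_const_mul _ (by fun_prop), lintegral_add_left (by fun_prop),
          lintegral_const_mul _ (by fun_prop), lintegral_const_mul _ (by fun_prop)]
    _ ≤ ENNReal.ofReal (Real.sin (2 * α) ^ (b - 1) * 2 ^ b) *
        (ENNReal.ofReal (1 - l) * ENNReal.ofReal (π / (2 * c)) +
          ENNReal.ofReal l * ENNReal.ofReal (π / (2 * c))) := by
        gcongr
        · exact lintegral_tan_rpow_le hb0 hb1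
        · exact lintegral_inv_tan_rpow_le hb0 hb1
    _ = _ := by
        rw [← add_mul, ← ENNReal.ofReal_add hl1 hl0, sub_add_cancel, ENNReal.ofReal_one, one_mul,
          ← ENNReal.ofReal_mul (by positivity)]
        congr 1
        rw [Real.mul_rpow (by norm_num) hs.le, Real.rpow_sub_one two_ne_zero]
        field_simp

/-- Second half of the Schur test: integration of the kernel along the diameter. -/
lemma lintegral_dual {b θ : ℝ} (hb0 : 0 < b) (hb1 : b < 1) (hθ : Real.sin θ ≠ 0) :
    ∫⁻ r in Ioo (-1 : ℝ) 1,
        ENNReal.ofReal ((1 - r ^ 2) ^ b / (1 - 2 * r * Real.cos θ + r ^ 2))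
      ≤ ENNReal.ofReal (π / Real.cos (π * b / 2) * |2 * Real.sin θ| ^ (b - 1)) := by
  -- Both sides depend on `θ` only through `cos θ`, so `θ` may be replaced by `arccos (cos θ)`.
  have hcos : Real.cos (Real.arccos (Real.cos θ)) = Real.cos θ :=
    Real.cos_arccos (Real.neg_one_le_cos θ) (Real.cos_le_one θ)
  have hsin : Real.sin (Real.arccos (Real.cos θ)) = |Real.sin θ| := by
    rw [Real.sin_arccos, ← Real.sin_sq, Real.sqrt_sq_eq_abs]
  have hpos : 0 < |Real.sin θ| := abs_pos.2 hθ
  have h0 : 0 < Real.arccos (Real.cos θ) := by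
    refine lt_of_le_of_ne (Real.arccos_nonneg _) fun h => ?_
    rw [← h, Real.sin_zero] at hsin
    exact hpos.ne hsin
  have h1 : Real.arccos (Real.cos θ) < π := by
    refine lt_of_le_of_ne (Real.arccos_le_pi _) fun h => ?_
    rw [h, Real.sin_pi] at hsin
    exact hpos.ne hsin
  have h := lintegral_dual_aux hb0 hb1 (α := Real.arccos (Real.cos θ) / 2)
    ⟨by linarith, by linarith⟩
  rw [mul_div_cancel₀ _ two_ne_zero, hcos, hsin] at h
  simpa [abs_mul] using h

/-! ### The Schur test -/

/-- Hölder's inequality against the weight `|2 sin θ|^{-1/p}`, at a fixed point of the diameter. -/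
lemma holder_step {p : ℝ} (hp : 1 < p) {F : ℝ → ENNReal} (hF : Measurable F) {r : ℝ}
    (hr : r ∈ Ioo (-1 : ℝ) 1) :
    (∫⁻ θ in Ioc (0 : ℝ) (2 * π), ENNReal.ofReal (diskKernel r θ) * F θ) ^ p ≤
      ENNReal.ofReal ((2 * π / Real.cos (π * p⁻¹ / 2)) ^ (p - 1)) *
        ∫⁻ θ in Ioc (0 : ℝ) (2 * π), ENNReal.ofReal ((1 - r ^ 2) ^ (p⁻¹ - 1) * diskKernel r θ) *
          (F θ ^ p * ENNReal.ofReal |2 * Real.sin θ| ^ (1 - p⁻¹)) := by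
  have hp0 : 0 < p := by linarith
  have hb0 : 0 < p⁻¹ := by positivity
  have hb1 : p⁻¹ < 1 := inv_lt_one_of_one_lt₀ hp
  set c := Real.cos (π * p⁻¹ / 2) with hc
  have hc0 : 0 < c := Real.cos_pos_of_mem_Ioo
    ⟨by nlinarith [Real.pi_pos], by nlinarith [Real.pi_pos]⟩
  have h0 := one_sub_sq_pos_of_mem hr
  obtain ⟨q, hpq⟩ : ∃ q, p.HolderConjugate q := ⟨_, Real.HolderConjugate.conjExponent hp⟩
  have hq0 : 0 < q := hpq.symm.pos
  have hqinv : q⁻¹ = 1 - p⁻¹ := by linarith [hpq.inv_add_inv_eq_one]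
  have hpdq : p * q⁻¹ = p - 1 := by rw [hqinv]; field_simp
  let K : ℝ → ENNReal := fun θ => ENNReal.ofReal (diskKernel r θ)
  let S : ℝ → ENNReal := fun θ => ENNReal.ofReal |2 * Real.sin θ|
  have hK : Measurable K := (continuous_diskKernel hr).measurable.ennreal_ofReal
  have hS : Measurable S := by fun_prop
  have hKF : ∫⁻ θ in Ioc (0 : ℝ) (2 * π), K θ * F θ
      = ∫⁻ θ in Ioc (0 : ℝ) (2 * π), ((fun θ => K θ ^ p⁻¹ * (F θ * S θ ^ (p⁻¹ * q⁻¹))) *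
          fun θ => K θ ^ q⁻¹ * S θ ^ (-(p⁻¹ * q⁻¹))) θ := by
    refine lintegral_congr_ae ?_
    filter_upwards [ae_restrict_of_ae ae_sin_ne_zero] with θ hθ
    have hS0 : S θ ≠ 0 := by
      simp only [S, ne_eq, ENNReal.ofReal_eq_zero, not_le]
      positivity
    have e1 : S θ ^ (p⁻¹ * q⁻¹) * S θ ^ (-(p⁻¹ * q⁻¹)) = 1 := by
      rw [← ENNReal.rpow_add _ _ hS0 ENNReal.ofReal_ne_top]
      simp
    have e2 : K θ ^ p⁻¹ * K θ ^ q⁻¹ = K θ := by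
      rw [← ENNReal.rpow_add_of_nonneg _ _ (by positivity) (by positivity),
        hpq.inv_add_inv_eq_one, ENNReal.rpow_one]
    simp only [Pi.mul_apply]
    calc K θ * F θ = (K θ ^ p⁻¹ * K θ ^ q⁻¹) * F θ *
          (S θ ^ (p⁻¹ * q⁻¹) * S θ ^ (-(p⁻¹ * q⁻¹))) := by rw [e1, e2, mul_one]
      _ = _ := by ring
  have hA : ∀ θ, (K θ ^ p⁻¹ * (F θ * S θ ^ (p⁻¹ * q⁻¹))) ^ p
      = K θ * (F θ ^ p * S θ ^ (1 - p⁻¹)) := by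
    intro θ
    rw [ENNReal.mul_rpow_of_nonneg _ _ hp0.le, ENNReal.mul_rpow_of_nonneg _ _ hp0.le,
      ← ENNReal.rpow_mul, ← ENNReal.rpow_mul, inv_mul_cancel₀ hp0.ne', ENNReal.rpow_one,
      show p⁻¹ * q⁻¹ * p = 1 - p⁻¹ by rw [← hqinv]; field_simp]
  have hB : ∫⁻ θ in Ioc (0 : ℝ) (2 * π), (K θ ^ q⁻¹ * S θ ^ (-(p⁻¹ * q⁻¹))) ^ q
      ≤ ENNReal.ofReal (2 * π / c * (1 - r ^ 2) ^ (-p⁻¹)) := by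
    refine le_trans (le_of_eq (lintegral_congr_ae ?_)) (lintegral_diskKernel_mul_sin_le hb0 hb1 hr)
    filter_upwards [ae_restrict_of_ae ae_sin_ne_zero] with θ hθ
    have hpos : 0 < |2 * Real.sin θ| := by positivity
    rw [ENNReal.mul_rpow_of_nonneg _ _ hq0.le, ← ENNReal.rpow_mul, ← ENNReal.rpow_mul,
      inv_mul_cancel₀ hq0.ne', ENNReal.rpow_one,
      show -(p⁻¹ * q⁻¹) * q = -p⁻¹ by field_simp, ENNReal.ofReal_rpow_of_pos hpos]
  have hH := ENNReal.lintegral_mul_le_Lp_mul_Lq (volume.restrict (Ioc (0 : ℝ) (2 * π))) hpq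
    (f := fun θ => K θ ^ p⁻¹ * (F θ * S θ ^ (p⁻¹ * q⁻¹)))
    (g := fun θ => K θ ^ q⁻¹ * S θ ^ (-(p⁻¹ * q⁻¹)))
    (by fun_prop) (by fun_prop)
  rw [← hKF] at hH
  simp only [hA, one_div] at hH
  calc (∫⁻ θ in Ioc (0 : ℝ) (2 * π), K θ * F θ) ^ p
      ≤ ((∫⁻ θ in Ioc (0 : ℝ) (2 * π), K θ * (F θ ^ p * S θ ^ (1 - p⁻¹))) ^ p⁻¹ *
          ENNReal.ofReal (2 * π / c * (1 - r ^ 2) ^ (-p⁻¹)) ^ q⁻¹) ^ p := by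
        gcongr
        exact hH.trans (by gcongr)
    _ = (∫⁻ θ in Ioc (0 : ℝ) (2 * π), K θ * (F θ ^ p * S θ ^ (1 - p⁻¹))) *
          ENNReal.ofReal ((2 * π / c) ^ (p - 1) * (1 - r ^ 2) ^ (p⁻¹ - 1)) := by
        rw [ENNReal.mul_rpow_of_nonneg _ _ hp0.le, ← ENNReal.rpow_mul, ← ENNReal.rpow_mul,
          inv_mul_cancel₀ hp0.ne', ENNReal.rpow_one, mul_comm q⁻¹, hpdq,
          ENNReal.ofReal_rpow_of_pos (by positivity),
          Real.mul_rpow (by positivity) (by positivity), ← Real.rpow_mul h0.le,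
          show -p⁻¹ * (p - 1) = p⁻¹ - 1 by field_simp; ring]
    _ = _ := by
        rw [ENNReal.ofReal_mul (by positivity), mul_comm, mul_assoc,
          ← lintegral_const_mul _ (by fun_prop)]
        congr 1
        refine lintegral_congr fun θ => ?_
        rw [ENNReal.ofReal_mul (by positivity), mul_assoc]

/-- The Poisson operator from the circle to the diameter is bounded on `L^p` with the sharp
constant. -/
lemma schur_bound {p : ℝ} (hp : 1 < p) {F : ℝ → ENNReal} (hF : Measurable F) :
    ∫⁻ r in Ioo (-1 : ℝ) 1,
        (∫⁻ θ in Ioc (0 : ℝ) (2 * π), ENNReal.ofReal (diskKernel r θ) * F θ) ^ p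
      ≤ ENNReal.ofReal ((2 * π) ^ p * (1 / (2 * Real.cos (π * p⁻¹ / 2) ^ p))) *
        ∫⁻ θ in Ioc (0 : ℝ) (2 * π), F θ ^ p := by
  have hp0 : 0 < p := by linarith
  have hb0 : 0 < p⁻¹ := by positivity
  have hb1 : p⁻¹ < 1 := inv_lt_one_of_one_lt₀ hp
  set c := Real.cos (π * p⁻¹ / 2) with hc
  have hc0 : 0 < c := Real.cos_pos_of_mem_Ioo
    ⟨by nlinarith [Real.pi_pos], by nlinarith [Real.pi_pos]⟩
  have hm : Measurable fun x : ℝ × ℝ =>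
      ENNReal.ofReal ((1 - x.1 ^ 2) ^ (p⁻¹ - 1) * diskKernel x.1 x.2) :=
    (Measurable.mul (by fun_prop) measurable_diskKernel).ennreal_ofReal
  have hW : Measurable fun θ => F θ ^ p * ENNReal.ofReal |2 * Real.sin θ| ^ (1 - p⁻¹) := by
    fun_prop
  have hm2 : Measurable fun x : ℝ × ℝ =>
      ENNReal.ofReal ((1 - x.1 ^ 2) ^ (p⁻¹ - 1) * diskKernel x.1 x.2) *
        (F x.2 ^ p * ENNReal.ofReal |2 * Real.sin x.2| ^ (1 - p⁻¹)) :=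
    hm.mul (hW.comp measurable_snd)
  have hinner : ∀ θ, (∫⁻ r in Ioo (-1 : ℝ) 1,
      ENNReal.ofReal ((1 - r ^ 2) ^ (p⁻¹ - 1) * diskKernel r θ)) *
        (F θ ^ p * ENNReal.ofReal |2 * Real.sin θ| ^ (1 - p⁻¹))
      ≤ ENNReal.ofReal (π / c) * F θ ^ p := by
    intro θ
    by_cases hθ : Real.sin θ = 0
    · simp [hθ, ENNReal.zero_rpow_of_pos (sub_pos.2 hb1)]
    have hpos : 0 < |2 * Real.sin θ| := by positivity
    have h1 : ∫⁻ r in Ioo (-1 : ℝ) 1,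
        ENNReal.ofReal ((1 - r ^ 2) ^ (p⁻¹ - 1) * diskKernel r θ)
        ≤ ENNReal.ofReal (π / c * |2 * Real.sin θ| ^ (p⁻¹ - 1)) := by
      refine le_trans (le_of_eq (setLIntegral_congr_fun measurableSet_Ioo fun r hr => ?_))
        (lintegral_dual hb0 hb1 hθ)
      have h0 := one_sub_sq_pos_of_mem hr
      simp only [diskKernel]
      congr 1
      rw [Real.rpow_sub_one h0.ne']
      field_simp
    refine (mul_le_mul_left h1 _).trans (le_of_eq ?_)
    rw [ENNReal.ofReal_rpow_of_pos hpos, mul_comm (F θ ^ p), ← mul_assoc,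
      ← ENNReal.ofReal_mul (by positivity), mul_assoc, ← Real.rpow_add hpos]
    simp
  calc _ ≤ ∫⁻ r in Ioo (-1 : ℝ) 1, ENNReal.ofReal ((2 * π / c) ^ (p - 1)) *
        ∫⁻ θ in Ioc (0 : ℝ) (2 * π), ENNReal.ofReal ((1 - r ^ 2) ^ (p⁻¹ - 1) * diskKernel r θ) *
          (F θ ^ p * ENNReal.ofReal |2 * Real.sin θ| ^ (1 - p⁻¹)) :=
        setLIntegral_mono' measurableSet_Ioo fun r hr => holder_step hp hF hr
    _ = ENNReal.ofReal ((2 * π / c) ^ (p - 1)) * ∫⁻ θ in Ioc (0 : ℝ) (2 * π),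
        (∫⁻ r in Ioo (-1 : ℝ) 1, ENNReal.ofReal ((1 - r ^ 2) ^ (p⁻¹ - 1) * diskKernel r θ)) *
          (F θ ^ p * ENNReal.ofReal |2 * Real.sin θ| ^ (1 - p⁻¹)) := by
        rw [lintegral_const_mul _ hm2.lintegral_prod_right',
          lintegral_lintegral_swap hm2.aemeasurable]
        congr 1
        refine lintegral_congr fun θ => ?_
        have hmθ : Measurable fun r =>
            ENNReal.ofReal ((1 - r ^ 2) ^ (p⁻¹ - 1) * diskKernel r θ) := by
          unfold diskKernel
          fun_prop
        dsimp only
        exact lintegral_mul_const _ hmθ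
    _ ≤ ENNReal.ofReal ((2 * π / c) ^ (p - 1)) * ∫⁻ θ in Ioc (0 : ℝ) (2 * π),
        ENNReal.ofReal (π / c) * F θ ^ p := by
        exact mul_le_mul' le_rfl (lintegral_mono fun θ => hinner θ)
    _ = _ := by
        rw [lintegral_const_mul _ (by fun_prop), ← mul_assoc, ← ENNReal.ofReal_mul (by positivity)]
        congr 2
        rw [Real.rpow_sub_one (by positivity), Real.div_rpow (by positivity) hc0.le]
        field_simp

/-! ### The inequality on the diameters -/

/-- The inequality along the real diameter. -/
lemma riesz_fejer_real_diameter {p : ℝ} (hp : 1 < p) {g : ℂ → ℂ}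
    (hgc : ContinuousOn g (Metric.closedBall 0 1))
    (hg : DifferentiableOn ℂ g (Metric.ball 0 1)) :
    (∫ r in (-1 : ℝ)..1, |(g r).re| ^ p) ≤
      (1 / (2 * Real.cos (π * p⁻¹ / 2) ^ p)) *
        ∫ θ in (0 : ℝ)..(2 * π), |(g (Complex.exp (θ * I))).re| ^ p := by
  have hp0 : 0 < p := by linarith
  have hc0 : 0 < Real.cos (π * p⁻¹ / 2) := by
    have hb0 : 0 < p⁻¹ := by positivity
    have hb1 : p⁻¹ < 1 := inv_lt_one_of_one_lt₀ hp
    exact Real.cos_pos_of_mem_Ioo ⟨by nlinarith [Real.pi_pos], by nlinarith [Real.pi_pos]⟩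
  have hfc : Continuous fun θ : ℝ => |(g (Complex.exp (θ * I))).re| :=
    (Complex.continuous_re.comp (continuous_boundary hgc)).abs
  have hfp : Continuous fun θ : ℝ => |(g (Complex.exp (θ * I))).re| ^ p :=
    hfc.rpow_const fun _ => Or.inr hp0.le
  have hpt : ∀ r ∈ Ioo (-1 : ℝ) 1, ENNReal.ofReal (2 * π * |(g r).re|) ≤
      ∫⁻ θ in Ioc (0 : ℝ) (2 * π), ENNReal.ofReal (diskKernel r θ) *
        ENNReal.ofReal |(g (Complex.exp (θ * I))).re| := by
    intro r hr
    have hint : Continuous fun θ : ℝ => diskKernel r θ * |(g (Complex.exp (θ * I))).re| :=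
      (continuous_diskKernel hr).mul hfc
    simp_rw [← ENNReal.ofReal_mul (diskKernel_pos hr _).le]
    rw [← ofReal_integral_eq_lintegral_ofReal ((hint.intervalIntegrable 0 (2 * π)).1)
      (ae_of_all _ fun θ => mul_nonneg (diskKernel_pos hr θ).le (abs_nonneg _)),
      ← intervalIntegral.integral_of_le (by positivity)]
    apply ENNReal.ofReal_le_ofReal
    have h := re_eq_integral_diskKernel hgc hg hr
    calc 2 * π * |(g r).re| = |2 * π * (g r).re| := by
          rw [abs_mul, abs_of_pos (by positivity : 0 < 2 * π)]
      _ ≤ ∫ θ in (0 : ℝ)..(2 * π), |diskKernel r θ * (g (Complex.exp (θ * I))).re| := by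
          rw [h]
          exact intervalIntegral.abs_integral_le_integral_abs (by positivity)
      _ = _ := by simp_rw [abs_mul, abs_of_pos (diskKernel_pos hr _)]
  have hmain : ∫⁻ r in Ioo (-1 : ℝ) 1, ENNReal.ofReal ((2 * π) ^ p * |(g r).re| ^ p) ≤
      ENNReal.ofReal ((2 * π) ^ p * (1 / (2 * Real.cos (π * p⁻¹ / 2) ^ p))) *
        ∫⁻ θ in Ioc (0 : ℝ) (2 * π), ENNReal.ofReal (|(g (Complex.exp (θ * I))).re| ^ p) := by
    have h := schur_bound hp (F := fun θ => ENNReal.ofReal |(g (Complex.exp (θ * I))).re|)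
      hfc.measurable.ennreal_ofReal
    simp only [ENNReal.ofReal_rpow_of_nonneg (abs_nonneg _) hp0.le] at h
    refine le_trans (setLIntegral_mono' measurableSet_Ioo fun r hr => ?_) h
    rw [← Real.mul_rpow (by positivity) (abs_nonneg _),
      ← ENNReal.ofReal_rpow_of_nonneg (by positivity) hp0.le]
    gcongr
    exact hpt r hr
  have hmaps : MapsTo (fun r : ℝ => (r : ℂ)) (Icc (-1) 1) (Metric.closedBall 0 1) := by
    intro r hr
    simpa [abs_le] using hr
  have hdc : ContinuousOn (fun r : ℝ => (2 * π) ^ p * |(g r).re| ^ p) (Icc (-1) 1) :=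
    continuousOn_const.mul (((Complex.continuous_re.comp_continuousOn
      (hgc.comp Complex.continuous_ofReal.continuousOn hmaps)).abs).rpow_const
        fun _ _ => Or.inr hp0.le)
  have hdi : IntegrableOn (fun r : ℝ => (2 * π) ^ p * |(g r).re| ^ p) (Ioo (-1) 1) :=
    (hdc.integrableOn_Icc).mono_set Ioo_subset_Icc_self
  rw [← ofReal_integral_eq_lintegral_ofReal hdi (ae_of_all _ fun r => by positivity),
    ← ofReal_integral_eq_lintegral_ofReal ((hfp.intervalIntegrable 0 (2 * π)).1)
      (ae_of_all _ fun r => by positivity), ← ENNReal.ofReal_mul (by positivity),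
    ← intervalIntegral.integral_of_le (by positivity), integral_const_mul,
    ← integral_Ioc_eq_integral_Ioo, ← intervalIntegral.integral_of_le (by norm_num)] at hmain
  have hnn : 0 ≤ ∫ θ in (0 : ℝ)..(2 * π), |(g (Complex.exp (θ * I))).re| ^ p :=
    intervalIntegral.integral_nonneg (by positivity) fun θ _ => by positivity
  have h := (ENNReal.ofReal_le_ofReal_iff (by positivity)).1 hmain
  rw [mul_assoc] at h
  exact le_of_mul_le_mul_left h (by positivity)

/-- Sharp Riesz–Fejér inequality along any diameter for the real part of a
function holomorphic on the unit disk and continuous on its closure. -/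
theorem riesz_fejer_harmonic_diameter (p : ℝ) (hp : 1 < p)
    (s : ℝ) (hs : s ∈ Set.Icc (0 : ℝ) (2 * π))
    (g : ℂ → ℂ) (hgc : ContinuousOn g (Metric.closedBall 0 1))
    (hg : DifferentiableOn ℂ g (Metric.ball 0 1)) :
    (∫ r in (-1 : ℝ)..1, |(g (r * Complex.exp (s * Complex.I))).re| ^ p) ≤
      (1 / (2 * Real.cos (π / (2 * p)) ^ p)) *
        ∫ θ in (0 : ℝ)..(2 * π), |(g (Complex.exp (θ * Complex.I))).re| ^ p := by
  have hnorm : ∀ z : ℂ, ‖z * Complex.exp (s * I)‖ = ‖z‖ := fun z => by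
    rw [norm_mul, norm_exp_ofReal_mul_I, mul_one]
  have h := riesz_fejer_real_diameter hp (g := fun z => g (z * Complex.exp (s * I)))
    (hgc.comp (by fun_prop) fun z hz => by
      simpa only [mem_closedBall_zero_iff, hnorm] using hz)
    (hg.comp (by fun_prop) fun z hz => by
      simpa only [mem_ball_zero_iff, hnorm] using hz)
  -- The boundary integral is invariant under the rotation, by periodicity.
  let f : ℝ → ℝ := fun θ => |(g (Complex.exp (θ * I))).re| ^ p
  have hper : Function.Periodic f (2 * π) := fun θ => by
    simp only [f]
    push_cast
    rw [add_mul, Complex.exp_add, Complex.exp_two_pi_mul_I, mul_one]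
  have hrot : ∫ θ in (0 : ℝ)..(2 * π), f (θ + s) = ∫ θ in (0 : ℝ)..(2 * π), f θ := by
    rw [intervalIntegral.integral_comp_add_right, zero_add, add_comm (2 * π)]
    simpa using hper.intervalIntegral_add_eq s 0
  have hf : ∀ θ : ℝ, |(g (Complex.exp (θ * I) * Complex.exp (s * I))).re| ^ p = f (θ + s) := by
    intro θ
    simp only [f]
    rw [← Complex.exp_add, ← add_mul, ← ofReal_add]
  simp only [hf] at h
  rw [hrot, show π * p⁻¹ / 2 = π / (2 * p) by field_simp] at h
  exact h
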